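/- arXiv:1211.1651 — 2 statements merged into one kernel-verified Lean document; each statement's English description precedes it below -/
import Mathlib

section
/- If G = F/R is a presentation of a group G by a free group F with normal subgroup R, then there is an exact sequence 1 → [F,R] → R ∩ [F,F] → H_2(G;ℤ) → 1; in particular H_2(G;ℤ) ≅ (R ∩ [F,F])/[F,R] (Hopf's formula). -/
/-- The boundary `C₂ → C₁` of the inhomogeneous bar complex computing group homology:
`∂[g₁|g₂] = [g₂] - [g₁g₂] + [g₁]`. -/
noncomputable def barD21 (k : Type) [CommRing k] (G : Type) [Group G] :
    ((G × G) →₀ k) →ₗ[k] (G →₀ k) :=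
  Finsupp.lift (G →₀ k) k (G × G) fun p =>
    Finsupp.single p.2 1 - Finsupp.single (p.1 * p.2) 1 + Finsupp.single p.1 1

/-- The boundary `C₃ → C₂` of the inhomogeneous bar complex computing group homology:
`∂[g₁|g₂|g₃] = [g₂|g₃] - [g₁g₂|g₃] + [g₁|g₂g₃] - [g₁|g₂]`. -/
noncomputable def barD32 (k : Type) [CommRing k] (G : Type) [Group G] :
    ((G × G × G) →₀ k) →ₗ[k] ((G × G) →₀ k) :=
  Finsupp.lift ((G × G) →₀ k) k (G × G × G) fun t =>
    Finsupp.single (t.2.1, t.2.2) 1 - Finsupp.single (t.1 * t.2.1, t.2.2) 1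
      + Finsupp.single (t.1, t.2.1 * t.2.2) 1 - Finsupp.single (t.1, t.2.1) 1

/-- Second group homology `H₂(G; k)`: 2-cycles modulo 2-boundaries of the inhomogeneous
bar complex. -/
noncomputable abbrev groupH2 (k : Type) [CommRing k] (G : Type) [Group G] : Type :=
  @HasQuotient.Quotient ↥(LinearMap.ker (barD21 k G))
    (Submodule k ↥(LinearMap.ker (barD21 k G)))
    (@Submodule.hasQuotient k ↥(LinearMap.ker (barD21 k G)) _ _ _)
    ((LinearMap.range (barD32 k G)).comap (LinearMap.ker (barD21 k G)).subtype)

namespace HopfAux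

open scoped commutatorElement

/-- `C₂ / B₂`. -/
abbrev M (G : Type) [Group G] : Type :=
  ((G × G) →₀ ℤ) ⧸ (LinearMap.range (barD32 ℤ G))

/-- The universal 2-cocycle. -/
noncomputable def u {G : Type} [Group G] (g h : G) : M G :=
  Submodule.Quotient.mk (Finsupp.single (g, h) 1)

theorem u_cocycle {G : Type} [Group G] (g h k : G) :
    u g h + u (g * h) k = u h k + u g (h * k) := by
  have h0 : (Submodule.Quotient.mk (barD32 ℤ G (Finsupp.single (g, h, k) 1)) : M G) = 0 := by
    rw [Submodule.Quotient.mk_eq_zero]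
    exact ⟨_, rfl⟩
  have h1 : barD32 ℤ G (Finsupp.single (g, h, k) 1) =
      Finsupp.single (h, k) 1 - Finsupp.single (g * h, k) 1
      + Finsupp.single (g, h * k) 1 - Finsupp.single (g, h) 1 := by
    simp [barD32]
  rw [h1, Submodule.Quotient.mk_sub, Submodule.Quotient.mk_add, Submodule.Quotient.mk_sub] at h0
  change u h k - u (g * h) k + u g (h * k) - u g h = 0 at h0
  have := sub_eq_zero.mp h0
  rw [← this]; abel

theorem u_one {G : Type} [Group G] (g : G) : u 1 g = u (1 : G) 1 := by
  have := u_cocycle (1 : G) 1 g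
  simp only [one_mul] at this
  exact (add_right_cancel this).symm

/-- Universal central extension-like group built from the universal cocycle. -/
@[ext] structure Ext (G : Type) [Group G] where
  m : M G
  g : G

namespace Ext
variable {G : Type} [Group G]

noncomputable instance : Mul (Ext G) := ⟨fun x y => ⟨x.m + y.m + u x.g y.g, x.g * y.g⟩⟩
noncomputable instance : One (Ext G) := ⟨⟨-u 1 1, 1⟩⟩
noncomputable instance : Inv (Ext G) := ⟨fun x => ⟨-x.m - u x.g⁻¹ x.g - u 1 1, x.g⁻¹⟩⟩

theorem mul_m (x y : Ext G) : (x * y).m = x.m + y.m + u x.g y.g := rfl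
theorem mul_g (x y : Ext G) : (x * y).g = x.g * y.g := rfl
theorem one_m : (1 : Ext G).m = -u 1 1 := rfl
theorem one_g : (1 : Ext G).g = 1 := rfl
theorem inv_m (x : Ext G) : (x⁻¹).m = -x.m - u x.g⁻¹ x.g - u 1 1 := rfl
theorem inv_g (x : Ext G) : (x⁻¹).g = x.g⁻¹ := rfl

noncomputable instance : Group (Ext G) := Group.ofLeftAxioms
  (by
    intro x y z
    ext1
    · simp only [mul_m, mul_g]
      have := u_cocycle x.g y.g z.g
      calc x.m + y.m + u x.g y.g + z.m + u (x.g * y.g) z.g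
          = x.m + y.m + z.m + (u x.g y.g + u (x.g * y.g) z.g) := by abel
        _ = _ := by rw [this]; abel
    · simp only [mul_g, mul_assoc])
  (by
    intro x
    ext1
    · simp only [mul_m, one_m, one_g, u_one x.g]; abel
    · simp only [mul_g, one_g, one_mul])
  (by
    intro x
    ext1
    · simp only [mul_m, one_m, inv_m, inv_g]; abel
    · simp only [mul_g, one_g, inv_g, inv_mul_cancel])

/-- Projection. -/
noncomputable def p : Ext G →* G := MonoidHom.mk' (fun x => x.g) (fun _ _ => rfl)

/-- Inclusion of `M`. -/
noncomputable def ι : Multiplicative (M G) →* Ext G :=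
  MonoidHom.mk' (fun m => ⟨m.toAdd - u 1 1, 1⟩) (by
    intro a b
    ext1
    · simp only [mul_m, toAdd_mul]; abel
    · simp only [mul_g, one_mul])

theorem ι_m (a : Multiplicative (M G)) : (ι a).m = a.toAdd - u 1 1 := rfl
theorem ι_g (a : Multiplicative (M G)) : (ι a).g = 1 := rfl

theorem u_one_right (g : G) : u g 1 = u (1 : G) 1 := by
  have := u_cocycle g (1 : G) 1
  simp only [mul_one] at this
  exact add_right_cancel this

theorem ι_mul (a : Multiplicative (M G)) (x : Ext G) : ι a * x = ⟨a.toAdd + x.m, x.g⟩ := by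
  ext1
  · simp only [mul_m, ι_m, ι_g, u_one x.g]; abel
  · simp only [mul_g, ι_g, one_mul]

theorem mul_ι (a : Multiplicative (M G)) (x : Ext G) : x * ι a = ⟨a.toAdd + x.m, x.g⟩ := by
  ext1
  · simp only [mul_m, ι_m, ι_g, u_one_right x.g]; abel
  · simp only [mul_g, ι_g, mul_one]

theorem ι_comm (a : Multiplicative (M G)) (x : Ext G) : ι a * x = x * ι a := by
  rw [ι_mul, mul_ι]

theorem ι_inj : Function.Injective (ι : Multiplicative (M G) →* Ext G) := by
  intro a b h
  have := congrArg Ext.m h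
  rw [ι_m, ι_m] at this
  exact Multiplicative.toAdd.injective (sub_left_injective this)

theorem eq_ι (x : Ext G) (hx : x.g = 1) : ι (Multiplicative.ofAdd (x.m + u 1 1)) = x := by
  ext1
  · rw [ι_m, toAdd_ofAdd, add_sub_cancel_right]
  · rw [ι_g, hx]

end Ext

section
variable {G : Type} [Group G]

theorem d21_single (g h : G) : barD21 ℤ G (Finsupp.single (g, h) 1) =
    Finsupp.single h 1 - Finsupp.single (g * h) 1 + Finsupp.single g 1 := by
  simp [barD21]

theorem d21_d32 : LinearMap.range (barD32 ℤ G) ≤ LinearMap.ker (barD21 ℤ G) := by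
  rw [LinearMap.range_le_ker_iff]
  refine Finsupp.lhom_ext' fun t => LinearMap.ext_ring ?_
  obtain ⟨g, h, k⟩ := t
  have h1 : barD32 ℤ G (Finsupp.single (g, h, k) 1) =
      Finsupp.single (h, k) 1 - Finsupp.single (g * h, k) 1
      + Finsupp.single (g, h * k) 1 - Finsupp.single (g, h) 1 := by
    simp [barD32]
  simp only [LinearMap.comp_apply, Finsupp.lsingle_apply, h1, map_sub, map_add, d21_single,
    mul_assoc, LinearMap.zero_apply]
  abel

/-- `∂ : C₂/B₂ → C₁`. -/
noncomputable def dM : M G →ₗ[ℤ] (G →₀ ℤ) :=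
  (LinearMap.range (barD32 ℤ G)).liftQ (barD21 ℤ G) d21_d32

theorem dM_u (g h : G) : dM (u g h) =
    Finsupp.single h 1 - Finsupp.single (g * h) 1 + Finsupp.single g 1 := d21_single g h

/-- The hom `Ext G → C₁`. -/
noncomputable def τ : Ext G →* Multiplicative (G →₀ ℤ) :=
  MonoidHom.mk' (fun x => Multiplicative.ofAdd (dM x.m + Finsupp.single x.g 1)) (by
    intro x y
    rw [← ofAdd_add]
    congr 1
    simp only [Ext.mul_m, Ext.mul_g, map_add, dM_u]
    abel)

theorem τ_ι (a : Multiplicative (M G)) : τ (Ext.ι a) = Multiplicative.ofAdd (dM a.toAdd) := by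
  change Multiplicative.ofAdd (dM (a.toAdd - u 1 1) + Finsupp.single 1 1) = _
  congr 1
  simp [map_sub, dM_u]

theorem M_induction {P : M G → Prop} (h0 : P 0) (hadd : ∀ a b, P a → P b → P (a + b))
    (hneg : ∀ a, P a → P (-a)) (hu : ∀ g h, P (u g h)) (m : M G) : P m := by
  obtain ⟨c, rfl⟩ := Submodule.Quotient.mk_surjective _ m
  have key : ∀ (p : G × G) (n : ℤ), P (n • u p.1 p.2) := by
    intro p n
    induction n with
    | zero => simpa using h0
    | succ n ih => rw [add_smul, one_smul]; exact hadd _ _ ih (hu _ _)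
    | pred n ih => rw [sub_smul, one_smul, sub_eq_add_neg]; exact hadd _ _ ih (hneg _ (hu _ _))
  induction c using Finsupp.induction_linear with
  | zero => exact h0
  | add f g hf hg => exact hadd _ _ hf hg
  | single p n =>
    have := key p n
    rwa [u, ← Submodule.Quotient.mk_smul, Finsupp.smul_single, smul_eq_mul, mul_one] at this

variable {E : Type} [Group E] (s : G → E)
  (hs : ∀ g h, s g * s h * (s (g * h))⁻¹ ∈ Subgroup.center E)

noncomputable instance centerComm (E : Type) [Group E] : CommGroup (Subgroup.center E) :=
  { (inferInstance : Group (Subgroup.center E)) with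
    mul_comm := fun a b => Subtype.ext (Subgroup.mem_center_iff.mp b.2 a) }

/-- The factor set of a section. -/
def fs (g h : G) : Subgroup.center E := ⟨s g * s h * (s (g * h))⁻¹, hs g h⟩

theorem fs_mul (g h : G) : s g * s h = (fs s hs g h : E) * s (g * h) := by
  simp [fs]

theorem fs_cocycle (g h k : G) :
    fs s hs g h * fs s hs (g * h) k = fs s hs h k * fs s hs g (h * k) := by
  apply Subtype.ext
  apply mul_right_cancel (b := s (g * h * k))
  have hc := Subgroup.mem_center_iff.mp (fs s hs h k).2 (s g)
  rw [Subgroup.coe_mul, Subgroup.coe_mul, mul_assoc, ← fs_mul, ← mul_assoc, ← fs_mul]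
  rw [mul_assoc g h k, mul_assoc (fs s hs h k : E), ← fs_mul, ← mul_assoc, ← hc, mul_assoc,
    mul_assoc, ← fs_mul]

/-- The induced map on `C₂/B₂`. -/
noncomputable def φ : M G →ₗ[ℤ] Additive (Subgroup.center E) :=
  (LinearMap.range (barD32 ℤ G)).liftQ
    (Finsupp.lift (Additive (Subgroup.center E)) ℤ (G × G)
      fun p => Additive.ofMul (fs s hs p.1 p.2)) (by
    rw [LinearMap.range_le_ker_iff]
    refine Finsupp.lhom_ext' fun t => LinearMap.ext_ring ?_
    obtain ⟨g, h, k⟩ := t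
    have h1 : barD32 ℤ G (Finsupp.single (g, h, k) 1) =
        Finsupp.single (h, k) 1 - Finsupp.single (g * h, k) 1
        + Finsupp.single (g, h * k) 1 - Finsupp.single (g, h) 1 := by
      simp [barD32]
    have hc := congrArg Additive.ofMul (fs_cocycle s hs g h k)
    rw [ofMul_mul, ofMul_mul] at hc
    simp only [LinearMap.comp_apply, Finsupp.lsingle_apply, h1, map_sub, map_add,
      LinearMap.zero_apply]
    simp only [Finsupp.lift_apply, zero_smul, Finsupp.sum_single_index, one_smul]
    rw [sub_eq_zero, sub_add_eq_add_sub, sub_eq_iff_eq_add, hc])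

theorem φ_u (g h : G) : φ s hs (u g h) = Additive.ofMul (fs s hs g h) := by
  change (Finsupp.lift (Additive (Subgroup.center E)) ℤ (G × G)
      fun p => Additive.ofMul (fs s hs p.1 p.2)) (Finsupp.single (g, h) 1) = _
  simp

/-- `φ` with values in `E`. -/
noncomputable def φE (m : M G) : E := ((φ s hs m).toMul : Subgroup.center E)

theorem φE_zero : φE s hs 0 = 1 := by simp [φE]
theorem φE_add (a b : M G) : φE s hs (a + b) = φE s hs a * φE s hs b := by simp [φE]
theorem φE_neg (a : M G) : φE s hs (-a) = (φE s hs a)⁻¹ := by simp [φE]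
theorem φE_u (g h : G) : φE s hs (u g h) = s g * s h * (s (g * h))⁻¹ := by
  simp [φE, φ_u, fs]
theorem φE_comm (a : M G) (x : E) : x * φE s hs a = φE s hs a * x :=
  Subgroup.mem_center_iff.mp ((φ s hs a).toMul).2 x

/-- Map of extensions `Ext G → E`. -/
noncomputable def θ : Ext G →* E := MonoidHom.mk' (fun x => φE s hs x.m * s x.g) (by
  intro x y
  have h := φE_u s hs x.g y.g
  rw [Ext.mul_m, Ext.mul_g, φE_add, φE_add, h]
  have := φE_comm s hs y.m (s x.g)
  calc _ = φE s hs x.m * (φE s hs y.m * s x.g) * s y.g := by group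
    _ = _ := by rw [← this]; group)

theorem θ_apply (x : Ext G) : θ s hs x = φE s hs x.m * s x.g := rfl

end

theorem commutator_le_ker {F A : Type} [Group F] [CommGroup A] (f : F →* A) {x : F}
    (hx : x ∈ commutator F) : f x = 1 :=
  Abelianization.commutator_subset_ker f hx

section main
variable {α : Type} (R : Subgroup (FreeGroup α)) [R.Normal]

/-- Lift of the presentation to `Ext`. -/
noncomputable def ψ : FreeGroup α →* Ext (FreeGroup α ⧸ R) :=
  FreeGroup.lift fun a => ⟨0, QuotientGroup.mk (FreeGroup.of a)⟩

theorem ψ_g (x : FreeGroup α) : (ψ R x).g = (x : FreeGroup α ⧸ R) := by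
  have : Ext.p.comp (ψ R) = QuotientGroup.mk' R := by
    ext a
    simp [ψ, Ext.p]
  exact DFunLike.congr_fun this x

theorem ψ_mem {x : FreeGroup α} (hx : x ∈ R) : (ψ R x).g = 1 := by
  rw [ψ_g]; exact (QuotientGroup.eq_one_iff x).mpr hx

theorem ψ_comm {x : FreeGroup α} (hx : x ∈ ⁅(⊤ : Subgroup (FreeGroup α)), R⁆) : ψ R x = 1 := by
  have : ⁅(⊤ : Subgroup (FreeGroup α)), R⁆ ≤ (ψ R).ker := by
    rw [Subgroup.commutator_le]
    intro f _ r hr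
    rw [MonoidHom.mem_ker, map_commutatorElement, commutatorElement_eq_one_iff_mul_comm,
      ← Ext.eq_ι (ψ R r) (ψ_mem R hr), Ext.ι_comm]
  exact this hx

theorem comm_le : ⁅(⊤ : Subgroup (FreeGroup α)), R⁆ ≤ R ⊓ commutator (FreeGroup α) :=
  le_inf (Subgroup.commutator_le_right _ _) (by
    rw [commutator_def]; exact Subgroup.commutator_mono le_rfl le_top)

/-- The Hopf map. -/
noncomputable def Ψ : (R ⊓ commutator (FreeGroup α) : Subgroup (FreeGroup α)) →*
    Multiplicative (M (FreeGroup α ⧸ R)) :=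
  MonoidHom.mk' (fun x => Multiplicative.ofAdd ((ψ R x).m + u 1 1)) (by
    intro x y
    apply Ext.ι_inj
    rw [map_mul, Ext.eq_ι _ (ψ_mem R x.2.1), Ext.eq_ι _ (ψ_mem R y.2.1),
      Ext.eq_ι _ (ψ_mem R (x * y).2.1)]
    simp)

theorem ι_Ψ (x : (R ⊓ commutator (FreeGroup α) : Subgroup (FreeGroup α))) :
    Ext.ι (Ψ R x) = ψ R x := Ext.eq_ι _ (ψ_mem R x.2.1)

/-- The group `F/[F,R]`. -/
abbrev E : Type := FreeGroup α ⧸ ⁅(⊤ : Subgroup (FreeGroup α)), R⁆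

theorem central {x : FreeGroup α} (hx : x ∈ R) : (x : E R) ∈ Subgroup.center (E R) := by
  rw [Subgroup.mem_center_iff]
  intro g
  obtain ⟨f, rfl⟩ := QuotientGroup.mk_surjective g
  rw [← commutatorElement_eq_one_iff_mul_comm]
  change ((⁅f, x⁆ : FreeGroup α) : E R) = 1
  rw [QuotientGroup.eq_one_iff]
  exact Subgroup.commutator_mem_commutator trivial hx

/-- set-theoretic section into `F`. -/
noncomputable def sF (g : FreeGroup α ⧸ R) : FreeGroup α := Quotient.out g

theorem sF_mk (g : FreeGroup α ⧸ R) : ((sF R g : FreeGroup α) : FreeGroup α ⧸ R) = g :=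
  QuotientGroup.out_eq' g

/-- set-theoretic section into `E`. -/
noncomputable def s (g : FreeGroup α ⧸ R) : E R := (sF R g : FreeGroup α)

theorem hs (g h : FreeGroup α ⧸ R) : s R g * s R h * (s R (g * h))⁻¹ ∈ Subgroup.center (E R) := by
  have : sF R g * sF R h * (sF R (g * h))⁻¹ ∈ R := by
    rw [← QuotientGroup.eq_one_iff]
    simp [sF_mk]
  exact central R this

/-- Projection `E → G`. -/
noncomputable def q : E R →* FreeGroup α ⧸ R :=
  QuotientGroup.lift _ (QuotientGroup.mk' R) (fun x hx =>
    (QuotientGroup.eq_one_iff x).mpr ((comm_le R hx).1))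

theorem q_mk (x : FreeGroup α) : q R (x : E R) = x := rfl
theorem q_s (g : FreeGroup α ⧸ R) : q R (s R g) = g := sF_mk R g

theorem q_φE (m : M (FreeGroup α ⧸ R)) : q R (φE (s R) (hs R) m) = 1 := by
  induction m using M_induction with
  | h0 => simp [φE_zero]
  | hadd a b ha hb => simp [φE_add, ha, hb]
  | hneg a ha => simp [φE_neg, ha]
  | hu g h => simp [φE_u, q_s]

/-- `E → F^ab`. -/
noncomputable def ab : E R →* Abelianization (FreeGroup α) :=
  QuotientGroup.lift _ Abelianization.of (fun _ hx =>
    commutator_le_ker _ (comm_le R hx).2)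

theorem ab_mk (x : FreeGroup α) : ab R (x : E R) = Abelianization.of x := rfl

/-- linear extension of a function on `G` to `C₁`. -/
noncomputable def lin {G A : Type} [AddCommGroup A] (c : G → A) : (G →₀ ℤ) →ₗ[ℤ] A :=
  Finsupp.lift A ℤ G c

theorem lin_single {G A : Type} [AddCommGroup A] (c : G → A) (g : G) :
    lin c (Finsupp.single g 1) = c g := by simp [lin]

theorem ab_φE (m : M (FreeGroup α ⧸ R)) : Additive.ofMul (ab R (φE (s R) (hs R) m)) =
    lin (fun g => Additive.ofMul (ab R (s R g))) (dM m) := by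
  induction m using M_induction with
  | h0 => simp [φE_zero]
  | hadd a b ha hb => simp [φE_add, ha, hb]
  | hneg a ha => simp [φE_neg, ha]
  | hu g h =>
    rw [dM_u, φE_u]
    simp only [map_add, map_sub, lin_single, map_mul, map_inv, ofMul_mul, ofMul_inv]
    abel

/-- `E → Ext G`. -/
noncomputable def ψE : E R →* Ext (FreeGroup α ⧸ R) :=
  QuotientGroup.lift _ (ψ R) (fun _ hx => ψ_comm R hx)

theorem ψE_mk (x : FreeGroup α) : ψE R (x : E R) = ψ R x := rfl

theorem ψE_s_g (g : FreeGroup α ⧸ R) : (ψE R (s R g)).g = g := by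
  rw [s, ψE_mk, ψ_g, sF_mk]

theorem ψE_φE (m : M (FreeGroup α ⧸ R)) : ψE R (φE (s R) (hs R) m) =
    Ext.ι (Multiplicative.ofAdd (m + lin (fun g => (ψE R (s R g)).m) (dM m))) := by
  induction m using M_induction with
  | h0 => simp [φE_zero]
  | hadd a b ha hb =>
    rw [φE_add, map_mul, ha, hb, ← map_mul, ← ofAdd_add]
    congr 2
    simp only [map_add]; abel
  | hneg a ha =>
    rw [φE_neg, map_inv, ha, ← map_inv, ← ofAdd_neg]
    congr 2
    simp only [map_neg]; abel
  | hu g h =>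
    rw [dM_u, φE_u, map_mul, map_inv, mul_inv_eq_iff_eq_mul, Ext.ι_mul, map_mul]
    ext1
    · simp only [Ext.mul_m, ψE_s_g, map_add, map_sub, lin_single, toAdd_ofAdd]
      abel
    · simp only [Ext.mul_g, ψE_s_g]

theorem Ψ_ker : (Ψ R).ker = ⁅(⊤ : Subgroup (FreeGroup α)), R⁆.subgroupOf
            (R ⊓ commutator (FreeGroup α)) := by
  ext x
  rw [MonoidHom.mem_ker, Subgroup.mem_subgroupOf]
  constructor
  · intro hx
    have h1 : ψ R x = 1 := by rw [← ι_Ψ, hx, map_one]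
    have key : commutator (FreeGroup α) ≤
        MonoidHom.eqLocus (QuotientGroup.mk' _ : FreeGroup α →* E R)
          ((θ (s R) (hs R)).comp (ψ R)) := by
      have hz : ∀ y : FreeGroup α, ∃ z ∈ Subgroup.center (E R),
          (QuotientGroup.mk' _ : FreeGroup α →* E R) y =
            z * ((θ (s R) (hs R)).comp (ψ R)) y := by
        intro y
        refine ⟨(y : E R) * (((θ (s R) (hs R)).comp (ψ R)) y)⁻¹, ?_, by simp⟩
        obtain ⟨w, hw⟩ := QuotientGroup.mk_surjective
          ((y : E R) * (((θ (s R) (hs R)).comp (ψ R)) y)⁻¹)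
        rw [← hw]
        apply central
        rw [← QuotientGroup.eq_one_iff, ← q_mk, hw, map_mul, map_inv, q_mk,
          MonoidHom.comp_apply, θ_apply, map_mul, q_φE, q_s, ψ_g]
        simp
      rw [commutator_def, Subgroup.commutator_le]
      intro a _ b _
      obtain ⟨z, hz1, ha⟩ := hz a
      obtain ⟨w, hw1, hb⟩ := hz b
      change (QuotientGroup.mk' _ : FreeGroup α →* E R) _ = ((θ (s R) (hs R)).comp (ψ R)) _
      rw [map_commutatorElement, map_commutatorElement, ha, hb]
      generalize ((θ (s R) (hs R)).comp (ψ R)) a = a'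
      generalize ((θ (s R) (hs R)).comp (ψ R)) b = b'
      rw [Subgroup.mem_center_iff] at hz1 hw1
      simp only [commutatorElement_def, mul_inv_rev]
      calc z * a' * (w * b') * (a'⁻¹ * z⁻¹) * (b'⁻¹ * w⁻¹)
          = z * (a' * w) * b' * a'⁻¹ * z⁻¹ * b'⁻¹ * w⁻¹ := by group
        _ = (z * (w * a' * b' * a'⁻¹)) * z⁻¹ * b'⁻¹ * w⁻¹ := by rw [hw1]; group
        _ = w * (a' * b' * a'⁻¹ * b'⁻¹) * w⁻¹ := by rw [← hz1]; group
        _ = _ := by rw [← hw1]; group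
    have h2 := key x.2.2
    change ((x : FreeGroup α) : E R) = θ (s R) (hs R) (ψ R x) at h2
    rw [h1, map_one] at h2
    exact (QuotientGroup.eq_one_iff _).mp h2
  · intro hx
    apply Ext.ι_inj
    rw [ι_Ψ, ψ_comm R hx, map_one]

theorem Ψ_range (m : M (FreeGroup α ⧸ R)) :
    Multiplicative.ofAdd m ∈ (Ψ R).range ↔ dM m = 0 := by
  constructor
  · rintro ⟨x, hx⟩
    have h1 := commutator_le_ker (τ.comp (ψ R)) x.2.2
    rw [MonoidHom.comp_apply, ← ι_Ψ, hx, τ_ι] at h1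
    exact h1
  · intro hm
    obtain ⟨x, hx⟩ := QuotientGroup.mk_surjective (φE (s R) (hs R) m)
    have hR : x ∈ R := by
      rw [← QuotientGroup.eq_one_iff, ← q_mk, hx, q_φE]
    have hC : x ∈ commutator (FreeGroup α) := by
      have := ab_φE R m
      rw [hm, map_zero, ← hx, ab_mk] at this
      exact (QuotientGroup.eq_one_iff x).mp this
    refine ⟨⟨x, hR, hC⟩, ?_⟩
    apply Ext.ι_inj
    rw [ι_Ψ]
    change ψ R x = _
    rw [← ψE_mk, hx, ψE_φE, hm, map_zero, add_zero]

end main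

/-- `H₂ → C₂/B₂`. -/
noncomputable def j (G : Type) [Group G] : groupH2 ℤ G →ₗ[ℤ] M G :=
  Submodule.mapQ _ _ (LinearMap.ker (barD21 ℤ G)).subtype le_rfl

theorem j_inj (G : Type) [Group G] : Function.Injective (j G) := by
  rw [← LinearMap.ker_eq_bot, j, Submodule.ker_mapQ]
  exact Submodule.mkQ_map_self _

theorem j_range {G : Type} [Group G] (m : M G) : (∃ z, j G z = m) ↔ dM m = 0 := by
  constructor
  · rintro ⟨z, rfl⟩
    obtain ⟨c, rfl⟩ := Submodule.Quotient.mk_surjective _ z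
    exact c.2
  · intro h
    obtain ⟨c, rfl⟩ := Submodule.Quotient.mk_surjective _ m
    exact ⟨Submodule.Quotient.mk ⟨c, h⟩, rfl⟩

end HopfAux

/-- Hopf's formula: for a presentation `G = F/R` of a group by a free group `F` with
normal subgroup `R`, one has `[F,R] ≤ R ∩ [F,F]` and
`H₂(G; ℤ) ≅ (R ∩ [F,F]) / [F,R]` (equivalently, the sequence
`1 → [F,R] → R ∩ [F,F] → H₂(G;ℤ) → 1` is exact). -/
theorem hopf_formula (α : Type) (R : Subgroup (FreeGroup α)) [R.Normal] :
    ⁅(⊤ : Subgroup (FreeGroup α)), R⁆ ≤ R ⊓ commutator (FreeGroup α)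
    ∧ Nonempty (groupH2 ℤ (FreeGroup α ⧸ R) ≃+
        Additive ((R ⊓ commutator (FreeGroup α) : Subgroup (FreeGroup α)) ⧸
          (⁅(⊤ : Subgroup (FreeGroup α)), R⁆.subgroupOf
            (R ⊓ commutator (FreeGroup α))))) := by
  refine ⟨HopfAux.comm_le R, ?_⟩
  have hrange : (AddMonoidHom.toMultiplicative
      (HopfAux.j (FreeGroup α ⧸ R)).toAddMonoidHom).range = (HopfAux.Ψ R).range := by
    ext m
    exact (HopfAux.j_range m.toAdd).trans (HopfAux.Ψ_range R m.toAdd).symm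
  have e1 := MonoidHom.ofInjective (f := AddMonoidHom.toMultiplicative
      (HopfAux.j (FreeGroup α ⧸ R)).toAddMonoidHom) (HopfAux.j_inj _)
  have e2 := QuotientGroup.quotientKerEquivRange (HopfAux.Ψ R)
  have e3 := QuotientGroup.quotientMulEquivOfEq (HopfAux.Ψ_ker R)
  have e := (e1.trans (MulEquiv.subgroupCongr hrange)).trans (e2.symm.trans e3)
  exact ⟨MulEquiv.toAdditiveRight e⟩
end

section
/- Let G = F/R be a finite presentation and k a field of characteristic ℓ. Then dim_k H_2(G;k) ≤ a + b - c + e, where a = dim_k Tor(H_1(G;ℤ), k), ℓ^b and ℓ^c are the orders of the ℓ-primary subgroups of F/R[F,F] and F/R^ℓ[F,F] respectively, and e = dim_k (k ⊗_ℤ R/[F,R]). -/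
open scoped commutatorElement

/-- The underlying set of the extension of `G` by `k` attached to a 2-cocycle. -/
structure CocExt (G k : Type) (f : G → G → k) where
  fst : G
  snd : k

theorem cocExt_lift {G k α : Type} [Group G] [CommRing k] (f : G → G → k)
    (hf : ∀ g h j, f h j - f (g * h) j + f g (h * j) - f g h = 0)
    (p : FreeGroup α →* G) :
    ∃ t : FreeGroup α → k, ∀ v w, t (v * w) = t v + t w + f (p v) (p w) := by
  have h1 : ∀ x, f 1 x = f 1 1 := fun x => by
    have := hf 1 1 x
    simp only [one_mul] at this
    linear_combination this
  let _ : Mul (CocExt G k f) := ⟨fun x y => ⟨x.fst * y.fst, x.snd + y.snd + f x.fst y.fst⟩⟩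
  let _ : One (CocExt G k f) := ⟨⟨1, -f 1 1⟩⟩
  let _ : Inv (CocExt G k f) := ⟨fun x => ⟨x.fst⁻¹, -x.snd - f x.fst⁻¹ x.fst - f 1 1⟩⟩
  have mul_def : ∀ x y : CocExt G k f,
    x * y = ⟨x.fst * y.fst, x.snd + y.snd + f x.fst y.fst⟩ := fun _ _ => rfl
  have one_def : (1 : CocExt G k f) = ⟨1, -f 1 1⟩ := rfl
  have inv_def : ∀ x : CocExt G k f,
    x⁻¹ = ⟨x.fst⁻¹, -x.snd - f x.fst⁻¹ x.fst - f 1 1⟩ := fun _ => rfl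
  let _ : Group (CocExt G k f) := Group.ofLeftAxioms
    (by
      rintro ⟨g, a⟩ ⟨h, b⟩ ⟨j, c⟩
      simp only [mul_def, CocExt.mk.injEq]
      refine ⟨mul_assoc _ _ _, ?_⟩
      linear_combination -(hf g h j))
    (by
      rintro ⟨g, a⟩
      simp only [mul_def, one_def, CocExt.mk.injEq]
      refine ⟨one_mul _, ?_⟩
      rw [h1 g]; ring)
    (by
      rintro ⟨g, a⟩
      simp only [mul_def, one_def, inv_def, CocExt.mk.injEq]
      refine ⟨inv_mul_cancel _, ?_⟩
      ring)
  let π : FreeGroup α →* CocExt G k f := FreeGroup.lift fun i => ⟨p (FreeGroup.of i), 0⟩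
  let pr : CocExt G k f →* G := { toFun := fun x => x.fst, map_one' := rfl, map_mul' := fun _ _ => rfl }
  have hp : pr.comp π = p := by
    ext i
    simp [π, pr]
  have hp' : ∀ w, (π w).fst = p w := fun w => DFunLike.congr_fun hp w
  refine ⟨fun w => (π w).snd, fun v w => ?_⟩
  have : (π (v * w)).snd = (π v).snd + (π w).snd + f (π v).fst (π w).fst := by
    rw [map_mul]; rfl
  rw [hp', hp'] at this
  exact this

theorem H2_bound (m ℓ : ℕ) [Fact (Nat.Prime ℓ)]
    (R : Subgroup (FreeGroup (Fin m))) [R.Normal]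
    (Rpow : Subgroup (FreeGroup (Fin m)))
    (hRpow : Rpow = Subgroup.closure {x | ∃ r ∈ R, x = r ^ ℓ})
    (W V : Type) [AddCommGroup W] [AddCommGroup V] [Module (ZMod ℓ) W] [Module (ZMod ℓ) V]
    [Finite W]
    (κ : R →* Multiplicative W) (hsurj : Function.Surjective κ)
    (hκ : ∀ r : R, κ r = 1 → (r : FreeGroup (Fin m)) ∈ ⁅(⊤ : Subgroup (FreeGroup (Fin m))), R⁆ ⊔ Rpow)
    (v : FreeGroup (Fin m) →* Multiplicative V) (vb : W →ₗ[ZMod ℓ] V)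
    (hv : ∀ r : R, vb (κ r).toAdd = (v r).toAdd) :
    ℓ ^ Module.finrank (ZMod ℓ) (groupH2 (ZMod ℓ) (FreeGroup (Fin m) ⧸ R)) ≤
      Nat.card {w : W // vb w = 0} := by
  classical
  have hℓ : ℓ.Prime := Fact.out
  have hkerc : Nat.card {w : W // vb w = 0} =
      ℓ ^ Module.finrank (ZMod ℓ) (LinearMap.ker vb) := by
    have h1 : Nat.card {w : W // vb w = 0} = Nat.card (LinearMap.ker vb) := rfl
    rw [h1, Module.natCard_eq_pow_finrank (K := ZMod ℓ), Nat.card_zmod]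
  rw [hkerc]
  refine Nat.pow_le_pow_right hℓ.pos ?_
  let F := FreeGroup (Fin m)
  let G := F ⧸ R
  let k := ZMod ℓ
  let s : G → F := Quotient.out
  have hs : ∀ g : G, (QuotientGroup.mk (s g) : G) = g := fun g => Quotient.out_eq' g
  have hρ : ∀ g h : G, s g * s h * (s (g * h))⁻¹ ∈ R := fun g h => by
    rw [← QuotientGroup.eq_one_iff]
    rw [QuotientGroup.mk_mul, QuotientGroup.mk_mul, QuotientGroup.mk_inv, hs, hs, hs]
    group
  let ρ : G → G → R := fun g h => ⟨_, hρ g h⟩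
  let Ψ : ((G × G) →₀ k) →ₗ[k] W :=
    Finsupp.lift W k (G × G) fun p => (κ (ρ p.1 p.2)).toAdd
  have hΨ : ∀ g h, Ψ (Finsupp.single (g, h) 1) = (κ (ρ g h)).toAdd := fun g h => by
    simp [Ψ]
  have hD21 : ∀ g h : G, barD21 k G (Finsupp.single (g, h) 1) =
      Finsupp.single h 1 - Finsupp.single (g * h) 1 + Finsupp.single g 1 := fun g h => by
    simp [barD21]
  have hD32 : ∀ g h j : G, barD32 k G (Finsupp.single (g, h, j) 1) =
      Finsupp.single (h, j) 1 - Finsupp.single (g * h, j) 1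
      + Finsupp.single (g, h * j) 1 - Finsupp.single (g, h) 1 := fun g h j => by
    simp [barD32]
  -- Ψ maps cycles to `ker vb`
  let S : (G →₀ k) →ₗ[k] V := Finsupp.lift V k G fun g => (v (s g)).toAdd
  have hS : ∀ g, S (Finsupp.single g 1) = (v (s g)).toAdd := fun g => by simp [S]
  have hcomp : vb ∘ₗ Ψ = S ∘ₗ barD21 k G := by
    ext ⟨g, h⟩
    simp only [LinearMap.comp_apply, Finsupp.lsingle_apply]
    rw [hΨ, hv, hD21, map_add, map_sub, hS, hS, hS]
    simp only [ρ, map_mul, map_inv, toAdd_mul, toAdd_inv]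
    abel
  -- a functional killing the boundaries
  have key : ∀ z ∈ LinearMap.ker (barD21 k G), Ψ z = 0 → z ∈ LinearMap.range (barD32 k G) := by
    intro z hz hz0
    by_contra hzB
    obtain ⟨φ, hφz, hφB⟩ := Submodule.exists_le_ker_of_notMem hzB
    let f : G → G → k := fun g h => φ (Finsupp.single (g, h) 1)
    have hf : ∀ g h j, f h j - f (g * h) j + f g (h * j) - f g h = 0 := fun g h j => by
      have : φ (barD32 k G (Finsupp.single (g, h, j) 1)) = 0 := hφB ⟨_, rfl⟩
      rw [hD32] at this
      simpa [f] using this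
    have h1 : ∀ x, f 1 x = f 1 1 := fun x => by
      have := hf 1 1 x
      simp only [one_mul] at this
      linear_combination this
    have h2 : ∀ x, f x 1 = f 1 1 := fun x => by
      have := hf x 1 1
      simp only [mul_one] at this
      linear_combination -this
    obtain ⟨t, ht⟩ := cocExt_lift f hf (QuotientGroup.mk' R)
    have hR1 : ∀ r ∈ R, QuotientGroup.mk' R r = 1 := fun r hr =>
      (QuotientGroup.eq_one_iff r).2 hr
    have htl : ∀ r ∈ R, ∀ x, t (r * x) = t r + t x + f 1 1 := fun r hr x => by
      rw [ht, hR1 r hr, h1]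
    have htr : ∀ r ∈ R, ∀ x, t (x * r) = t r + t x + f 1 1 := fun r hr x => by
      rw [ht, hR1 r hr, h2]; ring
    let θ : R →* Multiplicative k := MonoidHom.mk' (fun r => Multiplicative.ofAdd (t r + f 1 1))
      (fun r r' => by
        rw [← ofAdd_add, Subgroup.coe_mul, htl _ r.2]
        congr 1; ring)
    have hθ : ∀ r : R, (θ r).toAdd = t r + f 1 1 := fun r => rfl
    -- θ kills `[F,R] R^ℓ`
    have hθN : (⁅(⊤ : Subgroup (FreeGroup (Fin m))), R⁆ ⊔ Rpow) ≤ θ.ker.map R.subtype := by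
      refine sup_le ?_ ?_
      · rw [Subgroup.commutator_le]
        rintro x - r hr
        have hc : x * r * x⁻¹ ∈ R := ‹R.Normal›.conj_mem r hr x
        refine ⟨⟨⁅x, r⁆, ?_⟩, ?_, rfl⟩
        · exact R.mul_mem hc (R.inv_mem hr)
        · have e : (⟨⁅x, r⁆, R.mul_mem hc (R.inv_mem hr)⟩ : R) =
            ⟨x * r * x⁻¹, hc⟩ * (⟨r, hr⟩ : R)⁻¹ := rfl
          show θ _ = 1
          rw [e, map_mul, map_inv, mul_inv_eq_one]
          apply Multiplicative.toAdd.injective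
          rw [hθ, hθ]
          have a1 := htr r hr x
          have a2 := htl (x * r * x⁻¹) hc x
          rw [inv_mul_cancel_right] at a2
          show t (x * r * x⁻¹) + f 1 1 = t r + f 1 1
          linear_combination a1 - a2
      · rw [hRpow, Subgroup.closure_le]
        rintro _ ⟨r, hr, rfl⟩
        refine ⟨⟨r, hr⟩ ^ ℓ, ?_, rfl⟩
        show θ _ = 1
        rw [map_pow]
        apply Multiplicative.toAdd.injective
        rw [toAdd_pow]
        simp [k]
    have hker : ∀ r : R, κ r = 1 → θ r = 1 := fun r hr => by
      obtain ⟨r', hr', e⟩ := hθN (hκ r hr)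
      have : r' = r := Subtype.ext e
      rwa [this] at hr'
    have hle : κ.ker ≤ θ.ker := fun r hr => hker r hr
    let θ₁ : Multiplicative W →* Multiplicative k := κ.liftOfSurjective hsurj ⟨θ, hle⟩
    have hθ₁ : ∀ r, θ₁ (κ r) = θ r := fun r =>
      MonoidHom.liftOfRightInverse_comp_apply _ _ _ ⟨θ, hle⟩ r
    let θ₂ : W →ₗ[k] k := (AddMonoidHom.mk' (fun w : W => (θ₁ (Multiplicative.ofAdd w)).toAdd)
      (fun x y => by rw [ofAdd_add, map_mul, toAdd_mul])).toZModLinearMap ℓ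
    have hθ₂ : ∀ r, θ₂ (κ r).toAdd = (θ r).toAdd := fun r => by
      rw [← hθ₁]; rfl
    let U : (G →₀ k) →ₗ[k] k := Finsupp.lift k k G fun g => t (s g)
    have hU : ∀ g, U (Finsupp.single g 1) = t (s g) := fun g => by simp [U]
    have hφ : φ = θ₂ ∘ₗ Ψ - U ∘ₗ barD21 k G := by
      ext ⟨g, h⟩
      simp only [LinearMap.comp_apply, LinearMap.sub_apply, Finsupp.lsingle_apply]
      rw [hΨ, hθ₂, hθ, hD21, map_add, map_sub, hU, hU, hU]
      have a1 := ht (s g) (s h)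
      have a2 := htl _ (hρ g h) (s (g * h))
      rw [inv_mul_cancel_right] at a2
      have a3 : f (QuotientGroup.mk' R (s g)) (QuotientGroup.mk' R (s h)) = f g h := by
        show f (QuotientGroup.mk (s g)) (QuotientGroup.mk (s h)) = f g h
        rw [hs, hs]
      rw [a3] at a1
      show f g h = t (s g * s h * (s (g * h))⁻¹) + f 1 1 - _
      linear_combination a2 - a1
    apply hφz
    rw [hφ]
    simp only [LinearMap.comp_apply, LinearMap.sub_apply]
    rw [hz0, LinearMap.mem_ker.1 hz]
    simp
  -- conclude
  let Z := LinearMap.ker (barD21 k G)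
  let Ψ' : Z →ₗ[k] LinearMap.ker vb := (Ψ ∘ₗ Z.subtype).codRestrict _ (fun z => by
    have := LinearMap.congr_fun hcomp z.1
    simp only [LinearMap.comp_apply] at this
    rw [LinearMap.mem_ker, LinearMap.comp_apply]
    exact this.trans (by rw [LinearMap.mem_ker.1 z.2, map_zero]))
  have hle : LinearMap.ker Ψ' ≤ (LinearMap.range (barD32 k G)).comap Z.subtype := by
    intro z hz
    refine key z.1 z.2 ?_
    exact congrArg Subtype.val (LinearMap.mem_ker.1 hz)
  have _ : Module.Finite k W := Module.Finite.of_finite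
  have _ : Module.Finite k (LinearMap.range Ψ') := inferInstance
  have _ : Module.Finite k (Z ⧸ LinearMap.ker Ψ') :=
    Module.Finite.equiv Ψ'.quotKerEquivRange.symm
  calc _ ≤ Module.finrank k (Z ⧸ LinearMap.ker Ψ') :=
        LinearMap.finrank_le_finrank_of_surjective (f := Submodule.factor hle)
          (Submodule.factor_surjective hle)
    _ = Module.finrank k (LinearMap.range Ψ') := Ψ'.quotKerEquivRange.finrank_eq
    _ ≤ _ := Submodule.finrank_le _

theorem H2_bound_mul (m ℓ : ℕ) [Fact (Nat.Prime ℓ)]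
    (R : Subgroup (FreeGroup (Fin m))) [R.Normal]
    (Rpow : Subgroup (FreeGroup (Fin m)))
    (hRpow : Rpow = Subgroup.closure {x | ∃ r ∈ R, x = r ^ ℓ})
    (K V : Type) [CommGroup K] [CommGroup V] [Finite K]
    (hKpow : ∀ x : K, x ^ ℓ = 1) (hVpow : ∀ x : V, x ^ ℓ = 1)
    (κ : R →* K) (hsurj : Function.Surjective κ)
    (hκ : ∀ r : R, κ r = 1 → (r : FreeGroup (Fin m)) ∈ ⁅(⊤ : Subgroup (FreeGroup (Fin m))), R⁆ ⊔ Rpow)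
    (v : FreeGroup (Fin m) →* V) (vK : K →* V)
    (hv : ∀ r : R, vK (κ r) = v r) :
    ℓ ^ Module.finrank (ZMod ℓ) (groupH2 (ZMod ℓ) (FreeGroup (Fin m) ⧸ R)) ≤
      Nat.card vK.ker := by
  let _ : Module (ZMod ℓ) (Additive K) := AddCommGroup.zmodModule hKpow
  let _ : Module (ZMod ℓ) (Additive V) := AddCommGroup.zmodModule hVpow
  have fW : Finite (Additive K) := ‹Finite K›
  exact H2_bound m ℓ R Rpow hRpow (Additive K) (Additive V)
    (κ : R →* Multiplicative (Additive K)) hsurj hκ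
    (v : FreeGroup (Fin m) →* Multiplicative (Additive V))
    ((MonoidHom.toAdditive vK).toZModLinearMap ℓ) hv

theorem card_bound {F V : Type} [Group F] [CommGroup V] (ℓ : ℕ)
    (R : Subgroup F) [R.Normal] (Rpow : Subgroup F) [Rpow.Normal]
    (hRpow : Rpow = Subgroup.closure {x | ∃ r ∈ R, x = r ^ ℓ})
    (v : F →* V) (hV : ∀ x : V, x ^ ℓ = 1)
    (hv : ∀ x, v x = 1 → ∃ y : F, (y ^ ℓ)⁻¹ * x ∈ commutator F)
    (fA : Finite {x : Abelianization (F ⧸ R) // x ^ ℓ = 1})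
    (fB : Finite {x : F ⧸ (R ⊔ commutator F) // ∃ n : ℕ, x ^ ℓ ^ n = 1})
    (fI : Finite (R.map v)) :
    Nat.card {x : F ⧸ (Rpow ⊔ commutator F) // ∃ n : ℕ, x ^ ℓ ^ n = 1} ≤
      Nat.card {x : F ⧸ (R ⊔ commutator F) // ∃ n : ℕ, x ^ ℓ ^ n = 1} *
       (Nat.card {x : Abelianization (F ⧸ R) // x ^ ℓ = 1} * Nat.card (R.map v)) := by
  classical
  have hRR : Rpow ≤ R := by
    rw [hRpow, Subgroup.closure_le]
    rintro _ ⟨r, hr, rfl⟩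
    exact R.pow_mem hr _
  have hle : Rpow ⊔ commutator F ≤ R ⊔ commutator F := sup_le_sup_right hRR _
  have hvk : Rpow ⊔ commutator F ≤ v.ker := by
    refine sup_le ?_ (Abelianization.commutator_subset_ker v)
    rw [hRpow, Subgroup.closure_le]
    rintro _ ⟨r, hr, rfl⟩
    show v _ = 1
    rw [map_pow, hV]
  have hcomm : ∀ x y : F ⧸ (Rpow ⊔ commutator F), x * y = y * x := by
    intro x y
    induction x using QuotientGroup.induction_on with | _ x => ?_
    induction y using QuotientGroup.induction_on with | _ y => ?_
    rw [← QuotientGroup.mk_mul, ← QuotientGroup.mk_mul, QuotientGroup.eq]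
    apply (le_sup_right : commutator F ≤ _)
    have : (x * y)⁻¹ * (y * x) = ⁅y⁻¹, x⁻¹⁆ := by
      rw [commutatorElement_def]; group
    rw [this]
    exact Subgroup.commutator_mem_commutator (Subgroup.mem_top _) (Subgroup.mem_top _)
  let T : Subgroup (F ⧸ (Rpow ⊔ commutator F)) :=
    { carrier := {x | ∃ n : ℕ, x ^ ℓ ^ n = 1}
      one_mem' := ⟨0, one_pow _⟩
      inv_mem' := by
        rintro x ⟨n, hn⟩
        exact ⟨n, by rw [inv_pow, hn, inv_one]⟩
      mul_mem' := by
        rintro x y ⟨n, hn⟩ ⟨n', hn'⟩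
        refine ⟨n + n', ?_⟩
        rw [(show Commute x y from hcomm x y).mul_pow, pow_add, pow_mul, hn, one_pow, one_mul,
          mul_comm, pow_mul, hn', one_pow] }
  let q : (F ⧸ (Rpow ⊔ commutator F)) →* F ⧸ (R ⊔ commutator F) :=
    QuotientGroup.map _ _ (MonoidHom.id F) hle
  have hq : ∀ x : F, q x = (x : F ⧸ (R ⊔ commutator F)) := fun x => rfl
  let vq : (F ⧸ (Rpow ⊔ commutator F)) →* V := QuotientGroup.lift _ v hvk
  have hvq : ∀ x : F, vq x = v x := fun x => rfl
  let N := R.map (QuotientGroup.mk' (Rpow ⊔ commutator F))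
  have hN : q.ker ≤ N := by
    intro x hx
    induction x using QuotientGroup.induction_on with | _ x => ?_
    have hx' : x ∈ R ⊔ commutator F := (QuotientGroup.eq_one_iff x).1 hx
    obtain ⟨r, hr, d, hd, rfl⟩ := Subgroup.mem_sup_of_normal_right.1 hx'
    refine ⟨r, hr, ?_⟩
    show (r : F ⧸ (Rpow ⊔ commutator F)) = _
    rw [QuotientGroup.eq]
    simpa using (le_sup_right : commutator F ≤ Rpow ⊔ commutator F) hd
  -- the kernel of `N → V`
  let vN : N →* V := vq.comp N.subtype
  have hrange : vN.range = R.map v := by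
    ext y
    constructor
    · rintro ⟨⟨_, r, hr, rfl⟩, rfl⟩
      exact ⟨r, hr, rfl⟩
    · rintro ⟨r, hr, rfl⟩
      exact ⟨⟨_, r, hr, rfl⟩, rfl⟩
  have hkerx : ∀ n : vN.ker, ∃ x : F, (x : F ⧸ (Rpow ⊔ commutator F)) ^ ℓ = n.1.1 ∧
      (Abelianization.of (x : F ⧸ R)) ^ ℓ = 1 := by
    rintro ⟨⟨_, r, hr, rfl⟩, hn⟩
    have hn' : v r = 1 := hn
    obtain ⟨y, hy⟩ := hv r hn'
    refine ⟨y, ?_, ?_⟩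
    · show ((y ^ ℓ : F) : F ⧸ (Rpow ⊔ commutator F)) = (r : F ⧸ (Rpow ⊔ commutator F))
      rw [QuotientGroup.eq]
      exact (le_sup_right : commutator F ≤ _) hy
    · have h1 := Abelianization.commutator_subset_ker
        ((Abelianization.of).comp (QuotientGroup.mk' R)) hy
      have h2 : ((Abelianization.of).comp (QuotientGroup.mk' R)) r = 1 := by
        rw [MonoidHom.comp_apply, show QuotientGroup.mk' R r = 1 from
          (QuotientGroup.eq_one_iff r).2 hr, map_one]
      rw [MonoidHom.mem_ker, map_mul, h2, mul_one, map_inv, inv_eq_one, map_pow] at h1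
      exact h1
  choose X hX1 hX2 using hkerx
  have hXinj : Function.Injective (fun n => (⟨Abelianization.of (X n : F ⧸ R), hX2 n⟩ :
      {x : Abelianization (F ⧸ R) // x ^ ℓ = 1})) := by
    intro n n' h
    have h' : Abelianization.of (X n : F ⧸ R) = Abelianization.of (X n' : F ⧸ R) :=
      congrArg Subtype.val h
    have hd : (X n : F ⧸ R)⁻¹ * (X n' : F ⧸ R) ∈ commutator (F ⧸ R) := QuotientGroup.eq.1 h'
    have hmap : commutator (F ⧸ R) = (commutator F).map (QuotientGroup.mk' R) := by
      rw [commutator_def, commutator_def, Subgroup.map_commutator,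
        Subgroup.map_top_of_surjective _ (QuotientGroup.mk'_surjective R)]
    rw [hmap] at hd
    obtain ⟨d, hd, hd'⟩ := hd
    have hr : d⁻¹ * ((X n)⁻¹ * X n') ∈ R := by
      rw [← QuotientGroup.eq]; exact hd'
    set r := d⁻¹ * ((X n)⁻¹ * X n') with hrdef
    have hXX : X n' = X n * (d * r) := by rw [hrdef]; group
    have e1 : (d : F ⧸ (Rpow ⊔ commutator F)) = 1 :=
      (QuotientGroup.eq_one_iff d).2 ((le_sup_right : commutator F ≤ _) hd)
    have e2 : (r : F ⧸ (Rpow ⊔ commutator F)) ^ ℓ = 1 := by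
      rw [← QuotientGroup.mk_pow, QuotientGroup.eq_one_iff]
      apply (le_sup_left : Rpow ≤ _)
      rw [hRpow]
      exact Subgroup.subset_closure ⟨r, hr, rfl⟩
    apply Subtype.ext; apply Subtype.ext
    rw [← hX1, ← hX1, hXX, QuotientGroup.mk_mul, QuotientGroup.mk_mul, e1, one_mul,
      (show Commute _ _ from hcomm _ _).mul_pow, e2, mul_one]
  have hcardker : Nat.card vN.ker ≤ Nat.card {x : Abelianization (F ⧸ R) // x ^ ℓ = 1} :=
    Nat.card_le_card_of_injective _ hXinj
  have hNcard : Nat.card N = Nat.card (R.map v) * Nat.card vN.ker := by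
    rw [Subgroup.card_eq_card_quotient_mul_card_subgroup vN.ker,
      Nat.card_congr (QuotientGroup.quotientKerEquivRange vN).toEquiv, hrange]
  have fK : Finite vN.ker := Finite.of_injective _ hXinj
  have fN : Finite N := by
    apply Nat.finite_of_card_ne_zero
    rw [hNcard]
    exact mul_ne_zero Nat.card_pos.ne' Nat.card_pos.ne'
  let qT : T →* F ⧸ (R ⊔ commutator F) := q.comp T.subtype
  have hTcard : Nat.card T = Nat.card qT.range * Nat.card qT.ker := by
    rw [Subgroup.card_eq_card_quotient_mul_card_subgroup qT.ker,
      Nat.card_congr (QuotientGroup.quotientKerEquivRange qT).toEquiv]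
  have h1 : Nat.card qT.ker ≤ Nat.card N := by
    refine Nat.card_le_card_of_injective (fun x => (⟨x.1.1, hN x.2⟩ : N)) ?_
    intro x y h
    exact Subtype.ext (Subtype.ext (congrArg (fun z : N => z.1) h))
  have h2 : Nat.card qT.range ≤
      Nat.card {x : F ⧸ (R ⊔ commutator F) // ∃ n : ℕ, x ^ ℓ ^ n = 1} := by
    refine Nat.card_le_card_of_injective (fun x => ⟨x.1, ?_⟩) ?_
    · obtain ⟨_, ⟨x, n, hn⟩, rfl⟩ := x
      refine ⟨n, ?_⟩
      show (q x) ^ ℓ ^ n = 1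
      rw [← map_pow, hn, map_one]
    · intro x y h
      exact Subtype.ext (congrArg (fun z => z.1) h)
  show Nat.card T ≤ _
  rw [hTcard]
  refine Nat.mul_le_mul h2 (h1.trans ?_)
  rw [hNcard, mul_comm]
  exact Nat.mul_le_mul_right _ hcardker

/-- Roberts' bound: for a finite presentation `G = F/R` and `k = 𝔽_ℓ`,
`dim_k H₂(G;k) ≤ a + b - c + e`, where `ℓ^a` is the order of the `ℓ`-torsion
`Tor(H₁(G;ℤ), k)` of the abelianization `H₁(G;ℤ)`, `ℓ^b` and `ℓ^c` are the orders of the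
`ℓ`-primary subgroups of `F/R[F,F]` and `F/Rˡ[F,F]` respectively, and `ℓ^e` is the order
of `k ⊗_ℤ R/[F,R] ≅ R/([F,R]Rˡ)`. -/
theorem dim_H2_le (m ℓ : ℕ) [Fact (Nat.Prime ℓ)]
    (R : Subgroup (FreeGroup (Fin m))) [R.Normal]
    (Rpow : Subgroup (FreeGroup (Fin m)))
    (hRpow : Rpow = Subgroup.closure {x | ∃ r ∈ R, x = r ^ ℓ}) [Rpow.Normal]
    (a b c e : ℕ)
    (ha : Nat.card {x : Abelianization (FreeGroup (Fin m) ⧸ R) // x ^ ℓ = 1} = ℓ ^ a)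
    (hb : Nat.card {x : FreeGroup (Fin m) ⧸ (R ⊔ commutator (FreeGroup (Fin m))) //
        ∃ n : ℕ, x ^ ℓ ^ n = 1} = ℓ ^ b)
    (hc : Nat.card {x : FreeGroup (Fin m) ⧸ (Rpow ⊔ commutator (FreeGroup (Fin m))) //
        ∃ n : ℕ, x ^ ℓ ^ n = 1} = ℓ ^ c)
    (he : Nat.card ((R : Subgroup (FreeGroup (Fin m))) ⧸
        ((⁅(⊤ : Subgroup (FreeGroup (Fin m))), R⁆ ⊔ Rpow).subgroupOf R)) = ℓ ^ e) :
    (Module.finrank (ZMod ℓ) (groupH2 (ZMod ℓ) (FreeGroup (Fin m) ⧸ R)) : ℤ)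
      ≤ (a : ℤ) + b - c + e := by
  classical
  have hℓ : ℓ.Prime := Fact.out
  have hRR : Rpow ≤ R := by
    rw [hRpow, Subgroup.closure_le]
    rintro _ ⟨r, hr, rfl⟩
    exact R.pow_mem hr _
  have hpos : ∀ n, ℓ ^ n ≠ 0 := fun n => pow_ne_zero _ hℓ.ne_zero
  let F := FreeGroup (Fin m)
  let N := (⁅(⊤ : Subgroup (FreeGroup (Fin m))), R⁆ ⊔ Rpow).subgroupOf R
  let K := R ⧸ N
  let iK : CommGroup K :=
    { (inferInstance : Group K) with
      mul_comm := by
        intro x y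
        induction x using QuotientGroup.induction_on with | _ x => ?_
        induction y using QuotientGroup.induction_on with | _ y => ?_
        show ((x * y : R) : K) = ((y * x : R) : K)
        rw [QuotientGroup.eq]
        show (((x * y)⁻¹ * (y * x) : R) : FreeGroup (Fin m)) ∈
          ⁅(⊤ : Subgroup (FreeGroup (Fin m))), R⁆ ⊔ Rpow
        apply (le_sup_left : ⁅(⊤ : Subgroup (FreeGroup (Fin m))), R⁆ ≤ _)
        have : (((x * y)⁻¹ * (y * x) : R) : FreeGroup (Fin m)) =
            ⁅(y : FreeGroup (Fin m))⁻¹, (x : FreeGroup (Fin m))⁻¹⁆ := by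
          rw [commutatorElement_def]; push_cast; group
        rw [this]
        exact Subgroup.commutator_mem_commutator (Subgroup.mem_top _) (R.inv_mem x.2) }
  have hKpow : ∀ x : K, x ^ ℓ = 1 := by
    intro x
    induction x using QuotientGroup.induction_on with | _ x => ?_
    show ((x ^ ℓ : R) : K) = 1
    rw [QuotientGroup.eq_one_iff]
    show ((x : FreeGroup (Fin m)) ^ ℓ) ∈ ⁅(⊤ : Subgroup (FreeGroup (Fin m))), R⁆ ⊔ Rpow
    apply (le_sup_right : Rpow ≤ _)
    rw [hRpow]
    exact Subgroup.subset_closure ⟨x, x.2, rfl⟩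
  let P : Subgroup (Abelianization F) := (powMonoidHom ℓ : Abelianization F →* Abelianization F).range
  let V := Abelianization F ⧸ P
  have hVpow : ∀ x : V, x ^ ℓ = 1 := by
    intro x
    induction x using QuotientGroup.induction_on with | _ x => ?_
    rw [← QuotientGroup.mk_pow, QuotientGroup.eq_one_iff]
    exact ⟨x, rfl⟩
  let v : F →* V := (QuotientGroup.mk' P).comp Abelianization.of
  have hcardK : Nat.card K = ℓ ^ e := he
  have fK : Finite K := Nat.finite_of_card_ne_zero (by rw [hcardK]; exact hpos e)
  let κ : R →* K := QuotientGroup.mk' N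
  let vK : K →* V := QuotientGroup.lift N (v.comp R.subtype) (by
    intro r hr
    have hr' : (r : F) ∈ ⁅(⊤ : Subgroup (FreeGroup (Fin m))), R⁆ ⊔ Rpow := hr
    have : ⁅(⊤ : Subgroup (FreeGroup (Fin m))), R⁆ ⊔ Rpow ≤ v.ker := by
      refine sup_le (le_trans (Subgroup.commutator_mono le_rfl le_top)
        (Abelianization.commutator_subset_ker v)) ?_
      rw [hRpow, Subgroup.closure_le]
      rintro _ ⟨r, hr, rfl⟩
      show v _ = 1
      rw [map_pow, hVpow]
    exact this hr')
  have hH := H2_bound_mul m ℓ R Rpow hRpow K V hKpow hVpow κ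
    (QuotientGroup.mk'_surjective N)
    (fun r hr => by
      have : r ∈ N := (QuotientGroup.eq_one_iff r).1 hr
      exact this)
    v vK (fun r => rfl)
  have hmapR : R.map v = vK.range := by
    ext y
    constructor
    · rintro ⟨r, hr, rfl⟩
      exact ⟨((⟨r, hr⟩ : R) : K), rfl⟩
    · rintro ⟨x, rfl⟩
      induction x using QuotientGroup.induction_on with | _ x => ?_
      exact ⟨x, x.2, rfl⟩
  have fI : Finite (R.map v) := by 
    rw [hmapR]
    exact Finite.of_surjective vK.rangeRestrict vK.rangeRestrict_surjective
  have hC := card_bound ℓ R Rpow hRpow v hVpow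
    (fun x hx => by
      have hx' : Abelianization.of x ∈ P := (QuotientGroup.eq_one_iff _).1 hx
      obtain ⟨y, hy⟩ := hx'
      obtain ⟨y, rfl⟩ := QuotientGroup.mk_surjective y
      refine ⟨y, ?_⟩
      exact QuotientGroup.eq.1 hy)
    (Nat.finite_of_card_ne_zero (by rw [ha]; exact hpos a))
    (Nat.finite_of_card_ne_zero (by rw [hb]; exact hpos b)) fI
  rw [ha, hb, hc] at hC
  have hKc : Nat.card K = Nat.card (R.map v) * Nat.card vK.ker := by
    rw [Subgroup.card_eq_card_quotient_mul_card_subgroup vK.ker,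
      Nat.card_congr (QuotientGroup.quotientKerEquivRange vK).toEquiv, hmapR]
  rw [hcardK] at hKc
  set h := Module.finrank (ZMod ℓ) (groupH2 (ZMod ℓ) (FreeGroup (Fin m) ⧸ R))
  have hfin : ℓ ^ (c + h) ≤ ℓ ^ (a + b + e) := by
    calc ℓ ^ (c + h) = ℓ ^ c * ℓ ^ h := pow_add _ _ _
      _ ≤ (ℓ ^ b * (ℓ ^ a * Nat.card (R.map v))) * Nat.card vK.ker :=
        Nat.mul_le_mul hC hH
      _ = ℓ ^ b * ℓ ^ a * (Nat.card (R.map v) * Nat.card vK.ker) := by ring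
      _ = ℓ ^ (a + b + e) := by rw [← hKc]; ring
  have := (Nat.pow_le_pow_iff_right hℓ.one_lt).1 hfin
  omega
end
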